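/- arXiv:1301.6772 — 2 statements merged into one kernel-verified Lean document; each statement's English description precedes it below -/
import Mathlib

section
/- Assume n > (2γ + m(m−1))(R+1). Then the singular series 𝔖(b) = Σ_{q=1}^∞ q^{−mn} Σ_{a mod q, gcd(a,q)=1} S_{a,q}(b) is absolutely convergent. Moreover, for any ε > 0 and any Δ with 0 < Δ < (m+1)/(R+1), and any δ > 0 with 2δ/Δ < n/(2γ+m(m−1)) − (R+1), there is a constant K (depending only on A, m, n, ε, Δ, δ) such that |𝔖(b) − 𝔖(Π^Δ; b)| ≤ K·Π^{−2δ+ε}, uniformly in b. -/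
open scoped BigOperators
open MeasureTheory Matrix Filter

noncomputable section

/-- Index type for pairs `(i,j)` with `i ≤ j` (the `R = m(m+1)/2` upper-triangular positions). -/
abbrev Idx (m : ℕ) : Type := {p : Fin m × Fin m // p.1 ≤ p.2}

instance idxNonempty (m : ℕ) [NeZero m] : Nonempty (Idx m) :=
  ⟨⟨(0, 0), le_rfl⟩⟩

/-- `e(z) = exp(2πiz)` -/
def eR (z : ℝ) : ℂ := Complex.exp (2 * Real.pi * Complex.I * z)

/-- `xᵢᵀ A xⱼ` for integer vectors. -/
def quadZ {m n : ℕ} (A : Matrix (Fin n) (Fin n) ℤ) (x : Fin m → Fin n → ℤ)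
    (i j : Fin m) : ℤ :=
  ∑ s, ∑ t, x i s * A s t * x j t

/-- `vᵢᵀ A vⱼ` for real vectors. -/
def quadR {m n : ℕ} (A : Matrix (Fin n) (Fin n) ℤ) (v : Fin m → Fin n → ℝ)
    (i j : Fin m) : ℝ :=
  ∑ s, ∑ t, v i s * (A s t : ℝ) * v j t

/-- The tuple `b = (B_{ij})_{1 ≤ i ≤ j ≤ m}`. -/
def bvec {m : ℕ} (B : Matrix (Fin m) (Fin m) ℤ) (p : Idx m) : ℤ := B p.1.1 p.1.2

/-- `γ_i`, defined by `B₁₁ = B_{ii}^{γ_i}`, i.e. `γ_i = log B₁₁ / log B_{ii}`. -/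
def gamI {m : ℕ} [NeZero m] (B : Matrix (Fin m) (Fin m) ℤ) (i : Fin m) : ℝ :=
  Real.log ((B 0 0 : ℤ) : ℝ) / Real.log ((B i i : ℤ) : ℝ)

/-- `γ = Σ 1/γ_i`. -/
def gamT {m : ℕ} [NeZero m] (B : Matrix (Fin m) (Fin m) ℤ) : ℝ :=
  ∑ i, (gamI B i)⁻¹

/-- `P_i = C^{1/γ_i} B_{ii}^{1/2}`. -/
def PP {m : ℕ} [NeZero m] (C : ℝ) (B : Matrix (Fin m) (Fin m) ℤ) (i : Fin m) : ℝ :=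
  C ^ (gamI B i)⁻¹ * ((B i i : ℤ) : ℝ) ^ ((1 : ℝ) / 2)

/-- `Π = ∏ P_i`. -/
def PiP {m : ℕ} [NeZero m] (C : ℝ) (B : Matrix (Fin m) (Fin m) ℤ) : ℝ :=
  ∏ i, PP C B i

/-- The box of integer tuples `(x₁,…,x_m)` with `|x_i| ≤ P_i` (max-norm). -/
def box (m n : ℕ) [NeZero m] (C : ℝ) (B : Matrix (Fin m) (Fin m) ℤ) :
    Finset (Fin m → Fin n → ℤ) :=
  Finset.Icc (fun i _ => -⌊PP C B i⌋) (fun i _ => ⌊PP C B i⌋)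

/-- The exponential sum `S(α, b)`. -/
def Ssum {m n : ℕ} [NeZero m] (A : Matrix (Fin n) (Fin n) ℤ) (C : ℝ)
    (B : Matrix (Fin m) (Fin m) ℤ) (α : Idx m → ℝ) (b : Idx m → ℤ) : ℂ :=
  ∑ x ∈ box m n C B,
    eR (∑ p : Idx m, α p * ((quadZ A x p.1.1 p.1.2 - b p : ℤ) : ℝ))

/-- The complete exponential sum `S_{a,q}(b)`. -/
def Saq {m n : ℕ} (A : Matrix (Fin n) (Fin n) ℤ) (q : ℤ) (a b : Idx m → ℤ) : ℂ :=
  ∑ z ∈ (Finset.Icc (fun _ _ => 0) (fun _ _ => q - 1) : Finset (Fin m → Fin n → ℤ)),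
    eR ((∑ p : Idx m, (a p : ℝ) * ((quadZ A z p.1.1 p.1.2 - b p : ℤ) : ℝ)) / (q : ℝ))

/-- Residue tuples `a (mod q)` with `gcd(q, a) = 1`. -/
def resid (m : ℕ) (q : ℤ) : Finset (Idx m → ℤ) :=
  (Finset.Icc (fun _ => 0) (fun _ => q - 1)).filter fun a =>
    Int.gcd q (Finset.univ.gcd a) = 1

/-- The `q`-th term of the singular series. -/
def STerm {m n : ℕ} (A : Matrix (Fin n) (Fin n) ℤ) (B : Matrix (Fin m) (Fin m) ℤ)
    (q : ℕ) : ℂ :=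
  ((q : ℂ) ^ (m * n))⁻¹ * ∑ a ∈ resid m (q : ℤ), Saq A (q : ℤ) a (bvec B)

/-- The truncated singular series `𝔖(Q; b)`. -/
def SingT {m n : ℕ} (A : Matrix (Fin n) (Fin n) ℤ) (B : Matrix (Fin m) (Fin m) ℤ)
    (Q : ℝ) : ℂ :=
  ∑ q ∈ Finset.Icc 1 ⌊Q⌋₊, STerm A B q

/-- The singular series `𝔖(b) = Σ_{q=1}^∞ q^{-mn} Σ_{a mod q, (a,q)=1} S_{a,q}(b)`. -/
def Sing {m n : ℕ} (A : Matrix (Fin n) (Fin n) ℤ) (B : Matrix (Fin m) (Fin m) ℤ) : ℂ :=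
  ∑' q : ℕ, STerm A B q

/-- The oscillatory integral `I` with weights `w_p`;
`I(P,β)` is obtained with `w_p = P_iP_jβ_{ij}` and `I(η)` with `w = η`. -/
def Iint {m n : ℕ} (A : Matrix (Fin n) (Fin n) ℤ) (w : Idx m → ℝ) : ℂ :=
  ∫ v in (Set.univ.pi fun _ : Fin m => Set.univ.pi fun _ : Fin n => Set.Icc (-1 : ℝ) 1),
    eR (∑ p : Idx m, w p * quadR A v p.1.1 p.1.2)

/-- The truncated singular integral `𝔍(Q; c)`. -/
def JintT {m n : ℕ} (A : Matrix (Fin n) (Fin n) ℤ) (Q : ℝ) (c : Idx m → ℝ) : ℂ :=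
  ∫ η in (Set.univ.pi fun _ : Idx m => Set.Icc (-Q) Q),
    Iint (n := n) A η * eR (-(∑ p : Idx m, η p * c p))

/-- The singular integral `𝔍(c)`. -/
def Jint {m n : ℕ} (A : Matrix (Fin n) (Fin n) ℤ) (c : Idx m → ℝ) : ℂ :=
  ∫ η : Idx m → ℝ, Iint (n := n) A η * eR (-(∑ p : Idx m, η p * c p))

/-- The major arc `M_{a,q}(Δ)` (with constant `c₀`). -/
def MArc {m : ℕ} [NeZero m] (C : ℝ) (B : Matrix (Fin m) (Fin m) ℤ) (c₀ Δ : ℝ)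
    (q : ℤ) (a : Idx m → ℤ) : Set (Idx m → ℝ) :=
  {α | (∀ p, 0 ≤ α p ∧ α p < 1) ∧
    ∀ p : Idx m, |(q : ℝ) * α p - (a p : ℝ)| ≤
      c₀ * PiP C B ^ Δ * (PP C B p.1.1 * PP C B p.1.2)⁻¹}

/-- The enlarged major arc `M'_{a,q}(Δ)` (with constant `c₀`). -/
def MArc' {m : ℕ} [NeZero m] (C : ℝ) (B : Matrix (Fin m) (Fin m) ℤ) (c₀ Δ : ℝ)
    (q : ℤ) (a : Idx m → ℤ) : Set (Idx m → ℝ) :=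
  {α | (∀ p, 0 ≤ α p ∧ α p < 1) ∧
    ∀ p : Idx m, |(q : ℝ) * α p - (a p : ℝ)| ≤
      c₀ * (q : ℝ) * PiP C B ^ Δ * (PP C B p.1.1 * PP C B p.1.2)⁻¹}

/-- Admissible pairs `(q, a)`: `1 ≤ q ≤ c₀Π^Δ`, `0 ≤ a_{ij} < q`, `gcd(q,a) = 1`. -/
def validAQ {m : ℕ} [NeZero m] (C : ℝ) (B : Matrix (Fin m) (Fin m) ℤ) (c₀ Δ : ℝ)
    (q : ℤ) (a : Idx m → ℤ) : Prop :=
  1 ≤ q ∧ (q : ℝ) ≤ c₀ * PiP C B ^ Δ ∧ (∀ p, 0 ≤ a p ∧ a p < q) ∧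
    Int.gcd q (Finset.univ.gcd a) = 1

/-- The major arcs `M(Δ)`. -/
def MSet {m : ℕ} [NeZero m] (C : ℝ) (B : Matrix (Fin m) (Fin m) ℤ) (c₀ Δ : ℝ) :
    Set (Idx m → ℝ) :=
  ⋃ q : ℤ, ⋃ a : Idx m → ℤ, ⋃ _ : validAQ C B c₀ Δ q a, MArc C B c₀ Δ q a

/-- `N(A,B)`: the number of integral representations of `B` by `A`. -/
def NAB (m n : ℕ) (A : Matrix (Fin n) (Fin n) ℤ) (B : Matrix (Fin m) (Fin m) ℤ) : ℕ :=
  Nat.card {X : Matrix (Fin n) (Fin m) ℤ | Xᵀ * A * X = B}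

/-- `#{X mod q : XᵀAX ≡ B (mod q)}`. -/
def locCount (m n : ℕ) (A : Matrix (Fin n) (Fin n) ℤ) (B : Matrix (Fin m) (Fin m) ℤ)
    (q : ℕ) : ℕ :=
  Nat.card {X : Matrix (Fin n) (Fin m) (ZMod q) |
    Xᵀ * A.map ((↑) : ℤ → ZMod q) * X = B.map ((↑) : ℤ → ZMod q)}

/-- The archimedean density `α_∞(A,B)`. -/
def alphaInf (m n : ℕ) (A : Matrix (Fin n) (Fin n) ℤ)
    (B : Matrix (Fin m) (Fin m) ℤ) : ℝ :=
  ((A.det : ℤ) : ℝ) ^ (-(m : ℝ) / 2) * ((B.det : ℤ) : ℝ) ^ (((n : ℝ) - m - 1) / 2) *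
    Real.pi ^ ((m : ℝ) * (2 * (n : ℝ) - m + 1) / 4) *
    ∏ j ∈ Finset.Ioc (n - m) n, (Real.Gamma ((j : ℝ) / 2))⁻¹

/-- `max_{1≤i≤j≤m} |η_{ij}|`. -/
def maxAbs {m : ℕ} [NeZero m] (η : Idx m → ℝ) : ℝ := ⨆ p : Idx m, |η p|

/-- Weyl differencing for a quadratic function `f` on a finite group. -/
theorem norm_sum_addChar_quadratic_sq_le {G R : Type*} [AddCommGroup G] [Fintype G]
    [AddCommGroup R] [Finite R] (ψ : AddChar R ℂ) (f : G → R) (L : G → G →+ R)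
    (hf : ∀ z h, f (z + h) = f z + f h + L h z) :
    ‖∑ z, ψ (f z)‖ ^ 2 ≤ Nat.card G * Nat.card {h : G | ∀ z, ψ (L h z) = 1} := by
  classical
  have key : (∑ z, ψ (f z)) * (starRingEnd ℂ) (∑ z, ψ (f z)) =
      ∑ h, ψ (f h) * ∑ z, ψ.compAddMonoidHom (L h) z := by
    rw [map_sum, Finset.sum_mul_sum, Finset.sum_comm]
    simp_rw [Finset.mul_sum]
    rw [Finset.sum_comm (s := Finset.univ (α := G)) (t := Finset.univ (α := G))
      (f := fun h z => ψ (f h) * ψ.compAddMonoidHom (L h) z)]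
    refine Finset.sum_congr rfl fun z _ => ?_
    rw [← Equiv.sum_comp (Equiv.addLeft z)]
    refine Finset.sum_congr rfl fun h _ => ?_
    rw [← AddChar.map_neg_eq_conj, ← AddChar.map_add_eq_mul, Equiv.coe_addLeft, hf,
      AddChar.compAddMonoidHom_apply, ← AddChar.map_add_eq_mul]
    congr 1
    abel
  have hn : ‖∑ z, ψ (f z)‖ ^ 2 = ‖∑ h, ψ (f h) * ∑ z, ψ.compAddMonoidHom (L h) z‖ := by
    rw [← key, norm_mul, RCLike.norm_conj, sq]
  rw [hn]
  refine (norm_sum_le _ _).trans ?_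
  have hterm : ∀ h, ‖ψ (f h) * ∑ z, ψ.compAddMonoidHom (L h) z‖ =
      if ∀ z, ψ (L h z) = 1 then (Nat.card G : ℝ) else 0 := by
    intro h
    rw [norm_mul, AddChar.norm_apply, one_mul, AddChar.sum_eq_ite]
    have : ψ.compAddMonoidHom (L h) = 0 ↔ ∀ z, ψ (L h z) = 1 := by
      rw [AddChar.ext_iff]; simp
    simp only [this]
    split_ifs <;> simp
  simp only [hterm, ← Finset.sum_filter, Finset.sum_const, nsmul_eq_mul]
  rw [mul_comm, Nat.card_eq_fintype_card (α := {h : G | ∀ z, ψ (L h z) = 1}),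
    Fintype.card_subtype]
  rfl

theorem AddMonoidHom.card_ker_comp_le {G H K : Type*} [AddCommGroup G] [AddCommGroup H]
    [AddCommGroup K] [Finite G] [Finite H] (f : G →+ H) (g : H →+ K) :
    Nat.card (g.comp f).ker ≤ Nat.card f.ker * Nat.card g.ker := by
  let f' : (g.comp f).ker →+ g.ker :=
    (f.comp (g.comp f).ker.subtype).codRestrict g.ker fun x => x.2
  rw [← AddSubgroup.card_mul_index f'.ker, AddSubgroup.index_ker]
  refine Nat.mul_le_mul ?_ (Nat.card_le_card_of_injective _ Subtype.val_injective)
  refine Nat.card_le_card_of_injective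
    (fun x : f'.ker => (⟨x.1.1, congrArg Subtype.val x.2⟩ : f.ker)) fun x y h => ?_
  exact Subtype.ext (Subtype.ext (congrArg (fun z : f.ker => (z : G)) h))

/-- A matrix of which no divisor of `q` other than divisors of `2` divides all entries
has a small kernel modulo `q`. -/
theorem card_ker_mulVec_le {m q : ℕ} [NeZero q] (T : Matrix (Fin m) (Fin m) (ZMod q))
    (hT : ∀ N : ℕ, (∀ i j, (N : ZMod q) * T i j = 0) → q ∣ 2 * N) :
    q * Nat.card T.mulVecLin.toAddMonoidHom.ker ≤ 2 * q ^ m := by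
  set f := T.mulVecLin.toAddMonoidHom
  have h1 : Nat.card f.ker * Nat.card f.range = q ^ m := by
    rw [← AddSubgroup.index_ker, AddSubgroup.card_mul_index]; simp
  have h2 : q ∣ 2 * Nat.card f.range := by
    refine hT _ fun i j => ?_
    have h : Nat.card f.range • (⟨f (Pi.single j 1), ⟨_, rfl⟩⟩ : f.range) = 0 :=
      card_nsmul_eq_zero'
    have h' := congrFun (congrArg Subtype.val h) i
    simpa [f] using h'
  have h3 : q ≤ 2 * Nat.card f.range :=
    Nat.le_of_dvd (Nat.mul_pos two_pos Nat.card_pos) h2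
  calc q * Nat.card f.ker ≤ 2 * Nat.card f.range * Nat.card f.ker := Nat.mul_le_mul_right _ h3
    _ = 2 * q ^ m := by rw [← h1]; ring

theorem card_ker_mulLeft_le {m n q : ℕ} [NeZero q] (T : Matrix (Fin m) (Fin m) (ZMod q)) :
    Nat.card (Matrix.addMonoidHomMulLeft T : Matrix (Fin m) (Fin n) (ZMod q) →+ _).ker ≤
      Nat.card T.mulVecLin.toAddMonoidHom.ker ^ n := by
  have h : Nat.card (Fin n → T.mulVecLin.toAddMonoidHom.ker) =
      Nat.card T.mulVecLin.toAddMonoidHom.ker ^ n := by simp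
  rw [← h]
  refine Nat.card_le_card_of_injective
    (fun X s => ⟨fun j => X.1 j s, funext fun i => congrFun (congrFun X.2 i) s⟩) ?_
  intro X Y hXY
  refine Subtype.ext (Matrix.ext fun i s => ?_)
  exact congrFun (congrArg Subtype.val (congrFun hXY s)) i

theorem card_ker_mulRight_le {m n q : ℕ} [NeZero q] (A : Matrix (Fin n) (Fin n) ℤ)
    (hA : A.det ≠ 0) :
    Nat.card (Matrix.addMonoidHomMulRight (A.map ((↑) : ℤ → ZMod q)) :
      Matrix (Fin m) (Fin n) (ZMod q) →+ _).ker ≤ A.det.natAbs ^ (m * n) := by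
  classical
  set M : Matrix (Fin n) (Fin n) (ZMod q) := A.map ((↑) : ℤ → ZMod q)
  set D := A.det.natAbs with hD
  have hM : M.det = (A.det : ZMod q) := (Int.cast_det A).symm
  have hc : Nat.card {x : ZMod q // D • x = 0} ≤ D := by
    rw [Nat.card_eq_fintype_card, Fintype.card_subtype]
    exact IsAddCyclic.card_nsmul_eq_zero_le (Int.natAbs_pos.2 hA)
  calc _ ≤ Nat.card (Fin m → Fin n → {x : ZMod q // D • x = 0}) := by
        refine Nat.card_le_card_of_injective
          (fun X i s => ⟨X.1 i s, ?_⟩) ?_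
        · have h0 : X.1 * M = 0 := X.2
          have h1 : (A.det : ZMod q) • X.1 = 0 := by
            rw [← hM, ← Matrix.mul_one X.1, ← Matrix.mul_smul, ← Matrix.mul_adjugate,
              ← Matrix.mul_assoc, h0, Matrix.zero_mul]
          have h2 : (A.det : ZMod q) * X.1 i s = 0 := congrFun (congrFun h1 i) s
          rw [nsmul_eq_mul]
          rcases Int.natAbs_eq A.det with h | h
          · rw [h, Int.cast_natCast] at h2; exact h2
          · rw [h, Int.cast_neg, Int.cast_natCast, neg_mul, neg_eq_zero] at h2; exact h2
        · intro X Y hXY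
          refine Subtype.ext (Matrix.ext fun i s => ?_)
          exact congrArg Subtype.val (congrFun (congrFun hXY i) s)
    _ = Nat.card {x : ZMod q // D • x = 0} ^ (m * n) := by
        simp [← pow_mul, mul_comm]
    _ ≤ D ^ (m * n) := Nat.pow_le_pow_left hc _

/-- The upper triangular matrix modulo `q` with entries `a`. -/
def upperMat {m : ℕ} (q : ℕ) (a : Idx m → ℤ) : Matrix (Fin m) (Fin m) (ZMod q) :=
  fun i j => if h : i ≤ j then (a ⟨(i, j), h⟩ : ZMod q) else 0

theorem dvd_two_mul_of_upperMat {m q : ℕ} (a : Idx m → ℤ)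
    (ha : Int.gcd q (Finset.univ.gcd a) = 1) (N : ℕ)
    (hN : ∀ i j, (N : ZMod q) * (upperMat q a + (upperMat q a)ᵀ) i j = 0) : q ∣ 2 * N := by
  have h : ∀ p : Idx m, (q : ℤ) ∣ 2 * N * a p := by
    rintro ⟨⟨i, j⟩, hij⟩
    have h0 := hN i j
    rw [← ZMod.intCast_zmod_eq_zero_iff_dvd]
    push_cast
    rcases eq_or_lt_of_le (show i ≤ j from hij) with rfl | hlt
    · simp only [Matrix.add_apply, Matrix.transpose_apply, upperMat, le_refl, dite_true] at h0
      linear_combination h0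
    · simp only [Matrix.add_apply, Matrix.transpose_apply, upperMat, hlt.le, hlt.not_ge,
        dite_true, dite_false, add_zero] at h0
      linear_combination 2 * h0
  have hg : (q : ℤ) ∣ 2 * N * Finset.univ.gcd a := by
    have := Finset.dvd_gcd (s := Finset.univ) (f := fun p => (2 * N : ℤ) * a p) fun p _ => h p
    rw [Finset.gcd_mul_left] at this
    refine this.trans (mul_dvd_mul_right ?_ _)
    exact (normalize_associated _).dvd
  exact_mod_cast (Int.isCoprime_iff_gcd_eq_one.2 ha).dvd_of_dvd_mul_right hg

theorem card_upperMat_ker_le {m n q : ℕ} [NeZero q] (A : Matrix (Fin n) (Fin n) ℤ)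
    (hA : A.det ≠ 0) (a : Idx m → ℤ) (ha : Int.gcd q (Finset.univ.gcd a) = 1) :
    q ^ n * Nat.card {H : Matrix (Fin m) (Fin n) (ZMod q) |
        (upperMat q a + (upperMat q a)ᵀ) * (H * A.map ((↑) : ℤ → ZMod q)) = 0} ≤
      A.det.natAbs ^ (m * n) * 2 ^ n * q ^ (m * n) := by
  set T := upperMat q a + (upperMat q a)ᵀ
  have h1 := AddMonoidHom.card_ker_comp_le
    (Matrix.addMonoidHomMulRight (A.map ((↑) : ℤ → ZMod q)) :
      Matrix (Fin m) (Fin n) (ZMod q) →+ _)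
    (Matrix.addMonoidHomMulLeft T : Matrix (Fin m) (Fin n) (ZMod q) →+ _)
  have h2 := card_ker_mulVec_le T (dvd_two_mul_of_upperMat a ha)
  calc _ ≤ q ^ n * (A.det.natAbs ^ (m * n) * Nat.card T.mulVecLin.toAddMonoidHom.ker ^ n) :=
        Nat.mul_le_mul_left _ (h1.trans
          (Nat.mul_le_mul (card_ker_mulRight_le A hA) (card_ker_mulLeft_le T)))
    _ = A.det.natAbs ^ (m * n) * (q * Nat.card T.mulVecLin.toAddMonoidHom.ker) ^ n := by ring
    _ ≤ A.det.natAbs ^ (m * n) * (2 * q ^ m) ^ n := by gcongr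
    _ = _ := by ring

/-- The matrix form of the complete exponential sum, up to a factor of absolute value one. -/
theorem norm_Saq_eq {m n q : ℕ} [NeZero q] (A : Matrix (Fin n) (Fin n) ℤ) (a b : Idx m → ℤ) :
    ‖Saq A (q : ℤ) a b‖ = ‖∑ Z : Matrix (Fin m) (Fin n) (ZMod q),
      ZMod.stdAddChar (((upperMat q a)ᵀ * (Z * A.map ((↑) : ℤ → ZMod q) * Zᵀ)).trace)‖ := by
  have hF : ∀ z : Fin m → Fin n → ℤ,
      (((upperMat q a)ᵀ * ((Matrix.of z).map ((↑) : ℤ → ZMod q) *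
        A.map ((↑) : ℤ → ZMod q) * ((Matrix.of z).map ((↑) : ℤ → ZMod q))ᵀ)).trace) =
      ((∑ p : Idx m, a p * quadZ A z p.1.1 p.1.2 : ℤ) : ZMod q) := by
    intro z
    have hq : ∀ i j, ((Matrix.of z).map ((↑) : ℤ → ZMod q) *
        A.map ((↑) : ℤ → ZMod q) * ((Matrix.of z).map ((↑) : ℤ → ZMod q))ᵀ) i j =
        (quadZ A z i j : ZMod q) := by
      intro i j
      simp only [Matrix.mul_apply, Matrix.map_apply, Matrix.of_apply, Matrix.transpose_apply,
        quadZ, Finset.sum_mul]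
      rw [Finset.sum_comm]
      push_cast
      rfl
    simp only [Matrix.trace, Matrix.diag_apply]
    simp_rw [Matrix.mul_apply (M := (upperMat q a)ᵀ), hq]
    rw [Finset.sum_comm, ← Fintype.sum_prod_type'
      (f := fun i j => (upperMat q a)ᵀ j i * (quadZ A z i j : ZMod q))]
    push_cast
    have hp : ∀ p : Idx m, (a p : ZMod q) = upperMat q a p.1.1 p.1.2 := fun p => by
      simp [upperMat, p.2]
    simp_rw [hp]
    rw [← Finset.sum_subtype (Finset.univ.filter fun x : Fin m × Fin m => x.1 ≤ x.2) (by simp)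
      (fun x => upperMat q a x.1 x.2 * (quadZ A z x.1 x.2 : ZMod q))]
    refine (Finset.sum_filter_of_ne fun x _ hx => ?_).symm
    by_contra hn
    exact hx (by simp [upperMat, hn])
  have hS : Saq A (q : ℤ) a b = ZMod.stdAddChar ((-∑ p : Idx m, a p * b p : ℤ) : ZMod q) *
      ∑ Z : Matrix (Fin m) (Fin n) (ZMod q),
        ZMod.stdAddChar (((upperMat q a)ᵀ * (Z * A.map ((↑) : ℤ → ZMod q) * Zᵀ)).trace) := by
    rw [Finset.mul_sum, Saq]
    refine Finset.sum_nbij' (fun z => (Matrix.of z).map ((↑) : ℤ → ZMod q))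
      (fun Z i s => ((Z i s).val : ℤ)) ?_ ?_ ?_ ?_ ?_
    · simp
    · intro Z _
      rw [Finset.mem_Icc]
      exact ⟨fun i s => Int.natCast_nonneg _, fun i s => by
        have := ZMod.val_lt (Z i s)
        simp only
        omega⟩
    · intro z hz
      rw [Finset.mem_Icc] at hz
      funext i s
      have h0 : 0 ≤ z i s := hz.1 i s
      have h1 : z i s ≤ q - 1 := hz.2 i s
      simp only [Matrix.map_apply, Matrix.of_apply, ZMod.val_intCast]
      exact Int.emod_eq_of_lt h0 (by omega)
    · intro Z _
      ext i s
      simp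
    · intro z _
      rw [hF, ← AddChar.map_add_eq_mul, ← Int.cast_add, ZMod.stdAddChar_coe, eR]
      congr 1
      rw [← Finset.sum_neg_distrib, ← Finset.sum_add_distrib]
      push_cast
      rw [mul_div_assoc]
      congr 2
      exact Finset.sum_congr rfl fun p _ => by ring
  rw [hS, norm_mul, AddChar.norm_apply, one_mul]

theorem pow_mul_norm_Saq_sq_le {m n q : ℕ} [NeZero q] (A : Matrix (Fin n) (Fin n) ℤ)
    (hAs : A.IsSymm) (hA : A.det ≠ 0) (a b : Idx m → ℤ)
    (ha : Int.gcd q (Finset.univ.gcd a) = 1) :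
    (q : ℝ) ^ n * ‖Saq A (q : ℤ) a b‖ ^ 2 ≤
      (A.det.natAbs ^ (m * n) * 2 ^ n : ℕ) * ((q : ℝ) ^ (m * n)) ^ 2 := by
  set M : Matrix (Fin n) (Fin n) (ZMod q) := A.map ((↑) : ℤ → ZMod q) with hM
  have hMs : Mᵀ = M := by rw [hM, ← Matrix.transpose_map, hAs.eq]
  set U := upperMat q a
  let L : Matrix (Fin m) (Fin n) (ZMod q) → Matrix (Fin m) (Fin n) (ZMod q) →+ ZMod q := fun H =>
    AddMonoidHom.mk' (fun Z => ((U + Uᵀ) * (H * M) * Zᵀ).trace) fun X Y => by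
      simp [Matrix.mul_add]
  have hw := norm_sum_addChar_quadratic_sq_le (ZMod.stdAddChar (N := q))
    (fun Z : Matrix (Fin m) (Fin n) (ZMod q) => (Uᵀ * (Z * M * Zᵀ)).trace) L (by
      intro Z H
      have h1 : (Uᵀ * (Z * M * Hᵀ)).trace = (U * (H * M) * Zᵀ).trace := by
        rw [← Matrix.trace_transpose]
        simp only [Matrix.transpose_mul, Matrix.transpose_transpose, hMs]
        rw [Matrix.trace_mul_comm]
        simp only [Matrix.mul_assoc]
      simp only [Matrix.mul_assoc] at h1
      simp only [L, AddMonoidHom.mk'_apply, Matrix.transpose_add, Matrix.add_mul, Matrix.mul_add,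
        Matrix.trace_add, h1, Matrix.mul_assoc]
      ring)
  have hset : {H : Matrix (Fin m) (Fin n) (ZMod q) |
      ∀ Z, ZMod.stdAddChar (L H Z) = (1 : ℂ)} ⊆ {H | (U + Uᵀ) * (H * M) = 0} := by
    intro H hH
    rw [Set.mem_ofPred_eq, Matrix.ext_iff_trace_mul_right]
    intro X
    have h := hH Xᵀ
    rw [← AddChar.map_zero_eq_one (ZMod.stdAddChar (N := q))] at h
    have h' := ZMod.injective_stdAddChar h
    simpa [L] using h'
  have hcard := Nat.card_mono (Set.toFinite _) hset
  have hk := card_upperMat_ker_le A hA a ha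
  rw [norm_Saq_eq]
  calc _ ≤ (q : ℝ) ^ n * ((q : ℝ) ^ (m * n) * Nat.card {H : Matrix (Fin m) (Fin n) (ZMod q) |
          (U + Uᵀ) * (H * M) = 0}) := by
        refine mul_le_mul_of_nonneg_left (hw.trans ?_) (by positivity)
        have : Nat.card (Matrix (Fin m) (Fin n) (ZMod q)) = q ^ (m * n) := by
          simp [Matrix, ← pow_mul, mul_comm]
        rw [this]
        push_cast
        gcongr
    _ = (q : ℝ) ^ (m * n) * (q ^ n * Nat.card {H : Matrix (Fin m) (Fin n) (ZMod q) |
          (U + Uᵀ) * (H * M) = 0} : ℕ) := by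
        push_cast; ring
    _ ≤ (q : ℝ) ^ (m * n) * (A.det.natAbs ^ (m * n) * 2 ^ n * q ^ (m * n) : ℕ) := by
        gcongr
    _ = _ := by push_cast; ring

theorem card_Idx (m : ℕ) : (Fintype.card (Idx m) : ℝ) = (m : ℝ) * ((m : ℝ) + 1) / 2 := by
  rw [← Fintype.card_congr (Sym2.sortEquiv (α := Fin m)), Sym2.card, Fintype.card_fin,
    Nat.cast_choose_two]
  push_cast
  ring

theorem norm_Saq_le {m n q : ℕ} [NeZero q] (A : Matrix (Fin n) (Fin n) ℤ)
    (hAs : A.IsSymm) (hA : A.det ≠ 0) (a b : Idx m → ℤ)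
    (ha : Int.gcd q (Finset.univ.gcd a) = 1) :
    ‖Saq A (q : ℤ) a b‖ ≤
      (A.det.natAbs ^ (m * n) * 2 ^ n : ℕ) * ((q : ℝ) ^ (m * n) * (q : ℝ) ^ (-(n : ℝ) / 2)) := by
  set c : ℕ := A.det.natAbs ^ (m * n) * 2 ^ n
  have hq : (0 : ℝ) < q := Nat.cast_pos.2 (NeZero.pos q)
  have hc : (1 : ℝ) ≤ c := by
    exact_mod_cast Nat.one_le_iff_ne_zero.2 (by simp [c, hA])
  have hsq : ((q : ℝ) ^ ((n : ℝ) / 2)) ^ 2 = (q : ℝ) ^ n := by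
    rw [← Real.rpow_natCast, ← Real.rpow_mul hq.le, ← Real.rpow_natCast]
    congr 1
    push_cast
    ring
  have h : ‖Saq A (q : ℤ) a b‖ * (q : ℝ) ^ ((n : ℝ) / 2) ≤ c * (q : ℝ) ^ (m * n) := by
    refine le_of_sq_le_sq ?_ (by positivity)
    rw [mul_pow, hsq, mul_comm, mul_pow]
    refine (pow_mul_norm_Saq_sq_le A hAs hA a b ha).trans ?_
    gcongr
    exact le_self_pow₀ hc two_ne_zero
  rw [neg_div, Real.rpow_neg hq.le, ← mul_assoc]
  exact (le_mul_inv_iff₀ (by positivity)).2 h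

theorem card_resid_le (m q : ℕ) : (resid m (q : ℤ)).card ≤ q ^ Fintype.card (Idx m) := by
  refine (Finset.card_filter_le _ _).trans ?_
  rw [Pi.card_Icc]
  simp

theorem sum_norm_Saq_le {m n : ℕ} [NeZero m] [NeZero n] (A : Matrix (Fin n) (Fin n) ℤ)
    (hAs : A.IsSymm) (hA : A.det ≠ 0) (b : Idx m → ℤ) (q : ℕ) :
    (((q : ℝ)) ^ (m * n))⁻¹ * ∑ a ∈ resid m (q : ℤ), ‖Saq A (q : ℤ) a b‖ ≤
      (A.det.natAbs ^ (m * n) * 2 ^ n : ℕ) *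
        (q : ℝ) ^ ((m : ℝ) * ((m : ℝ) + 1) / 2 - (n : ℝ) / 2) := by
  rcases Nat.eq_zero_or_pos q with rfl | hq0
  · have : m * n ≠ 0 := mul_ne_zero (NeZero.ne m) (NeZero.ne n)
    simp only [Nat.cast_zero, zero_pow this, _root_.inv_zero, zero_mul]
    positivity
  have : NeZero q := ⟨hq0.ne'⟩
  have hq : (0 : ℝ) < q := Nat.cast_pos.2 hq0
  set c : ℕ := A.det.natAbs ^ (m * n) * 2 ^ n with hc
  have h1 : ∑ a ∈ resid m (q : ℤ), ‖Saq A (q : ℤ) a b‖ ≤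
      (q : ℝ) ^ Fintype.card (Idx m) *
        (c * ((q : ℝ) ^ (m * n) * (q : ℝ) ^ (-(n : ℝ) / 2))) := by
    refine (Finset.sum_le_card_nsmul _ _ _ fun a ha =>
      norm_Saq_le A hAs hA a b (Finset.mem_filter.1 ha).2).trans ?_
    rw [nsmul_eq_mul]
    gcongr
    exact_mod_cast card_resid_le m q
  calc _ ≤ ((q : ℝ) ^ (m * n))⁻¹ * ((q : ℝ) ^ Fintype.card (Idx m) *
        (c * ((q : ℝ) ^ (m * n) * (q : ℝ) ^ (-(n : ℝ) / 2)))) := by gcongr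
    _ = c * ((q : ℝ) ^ Fintype.card (Idx m) * (q : ℝ) ^ (-(n : ℝ) / 2)) := by field_simp
    _ = _ := by
        rw [← Real.rpow_natCast _ (Fintype.card (Idx m)), ← Real.rpow_add hq, card_Idx, neg_div,
          sub_eq_add_neg]

theorem norm_STerm_le {m n : ℕ} (A : Matrix (Fin n) (Fin n) ℤ) (B : Matrix (Fin m) (Fin m) ℤ)
    (q : ℕ) : ‖STerm A B q‖ ≤
      (((q : ℝ)) ^ (m * n))⁻¹ * ∑ a ∈ resid m (q : ℤ), ‖Saq A (q : ℤ) a (bvec B)‖ := by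
  rw [STerm, norm_mul, norm_inv, norm_pow, Complex.norm_natCast]
  gcongr
  exact norm_sum_le _ _

section Reduced

variable {m : ℕ} [NeZero m] {B : Matrix (Fin m) (Fin m) ℤ}

theorem one_le_inv_gamI (hB : ∀ i j : Fin m, i ≤ j → B i i ≤ B j j) (h2 : 2 ≤ B 0 0)
    (i : Fin m) : 1 ≤ (gamI B i)⁻¹ := by
  have h0 : (2 : ℝ) ≤ B 0 0 := by exact_mod_cast h2
  have hi : ((B 0 0 : ℤ) : ℝ) ≤ B i i := by exact_mod_cast hB 0 i (Fin.zero_le i)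
  rw [gamI, inv_div, one_le_div (Real.log_pos (by linarith))]
  exact Real.log_le_log (by linarith) hi

theorem le_gamT (hB : ∀ i j : Fin m, i ≤ j → B i i ≤ B j j) (h2 : 2 ≤ B 0 0) :
    (m : ℝ) ≤ gamT B := by
  have := Finset.card_nsmul_le_sum Finset.univ _ 1 fun i _ => one_le_inv_gamI hB h2 i
  simpa [gamT] using this

theorem one_le_PiP {C : ℝ} (hC : 1 ≤ C) (hB : ∀ i j : Fin m, i ≤ j → B i i ≤ B j j)
    (h2 : 2 ≤ B 0 0) : 1 ≤ PiP C B := by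
  refine Finset.one_le_prod fun i _ => ?_
  have hi : (1 : ℝ) ≤ B i i := by
    have := hB 0 i (Fin.zero_le i)
    exact_mod_cast (by omega : 1 ≤ B i i)
  exact one_le_mul_of_one_le_of_one_le
    (Real.one_le_rpow hC (zero_le_one.trans (one_le_inv_gamI hB h2 i)))
    (Real.one_le_rpow hi (by norm_num))

end Reduced

/-- Tail bound for a series whose terms decay like `q ^ (-1 - ρ - κ)`. -/
theorem norm_tsum_sub_sum_Icc_le {f : ℕ → ℂ} {c ρ κ Q : ℝ} (hc : 0 ≤ c) (hρ : 0 < ρ)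
    (hκ : 0 ≤ κ) (hQ : 0 < Q) (hf0 : f 0 = 0)
    (hf : ∀ q : ℕ, ‖f q‖ ≤ c * (q : ℝ) ^ (-1 - ρ - κ)) :
    ‖∑' q, f q - ∑ q ∈ Finset.Icc 1 ⌊Q⌋₊, f q‖ ≤
      c * (∑' q : ℕ, (q : ℝ) ^ (-1 - ρ)) * Q ^ (-κ) := by
  have hs : Summable fun q : ℕ => (q : ℝ) ^ (-1 - ρ) := Real.summable_nat_rpow.2 (by linarith)
  have hfs : Summable f := by
    exact Summable.of_norm_bounded
      ((Real.summable_nat_rpow (p := -1 - ρ - κ).2 (by linarith)).mul_left c) hf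
  set k := ⌊Q⌋₊ + 1
  have hk : ∑ q ∈ Finset.range k, f q = ∑ q ∈ Finset.Icc 1 ⌊Q⌋₊, f q := by
    rw [Finset.range_eq_Ico, Finset.sum_eq_sum_Ico_succ_bot (Nat.succ_pos _), hf0, zero_add]
    rfl
  have hinj : Function.Injective fun i : ℕ => i + k := add_left_injective k
  rw [← hfs.sum_add_tsum_nat_add k, hk, add_sub_cancel_left]
  have hb : ∀ i : ℕ, ‖f (i + k)‖ ≤ c * Q ^ (-κ) * ((i + k : ℕ) : ℝ) ^ (-1 - ρ) := by
    intro i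
    have hQk : Q ≤ ((i + k : ℕ) : ℝ) := by
      refine (Nat.lt_floor_add_one Q).le.trans ?_
      simp only [k]
      push_cast
      linarith [(Nat.cast_nonneg i : (0 : ℝ) ≤ i)]
    have hpos : (0 : ℝ) < ((i + k : ℕ) : ℝ) := hQ.trans_le hQk
    refine (hf _).trans ?_
    rw [sub_eq_add_neg (-1 - ρ), Real.rpow_add hpos, mul_assoc, mul_comm (Q ^ (-κ))]
    exact mul_le_mul_of_nonneg_left (mul_le_mul_of_nonneg_left
      (Real.rpow_le_rpow_of_nonpos hQ hQk (by linarith)) (by positivity)) hc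
  have hs' := hs.comp_injective hinj
  refine (tsum_of_norm_bounded (hs'.mul_left (c * Q ^ (-κ))).hasSum hb).trans ?_
  rw [tsum_mul_left, mul_right_comm]
  refine mul_le_mul_of_nonneg_right (mul_le_mul_of_nonneg_left ?_ hc) (by positivity)
  exact tsum_comp_le_tsum_of_inj hs (fun q => by positivity) hinj

/-- Lemma 5.1, singular series convergence. -/
theorem stmt9 (m n : ℕ) [NeZero m] [NeZero n]
    (A : Matrix (Fin n) (Fin n) ℤ) (hAs : A.IsSymm)
    (hApd : (A.map ((↑) : ℤ → ℝ)).PosDef)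
    (C : ℝ) (hC : 1 ≤ C)
    (ε Δ δ : ℝ) (hε : 0 < ε) (hΔ0 : 0 < Δ)
    (hΔ1 : Δ < ((m : ℝ) + 1) / ((m : ℝ) * ((m : ℝ) + 1) / 2 + 1)) (hδ0 : 0 < δ) :
    ∃ K : ℝ, 0 < K ∧
      ∀ B : Matrix (Fin m) (Fin m) ℤ, B.IsSymm →
        (B.map ((↑) : ℤ → ℝ)).PosDef →
        (∀ i j : Fin m, i ≤ j → B i i ≤ B j j) →
        (∀ i j : Fin m, i < j → |B i j| ≤ B i i) →
        2 ≤ B 0 0 →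
        (n : ℝ) > (2 * gamT B + (m : ℝ) * ((m : ℝ) - 1)) *
          ((m : ℝ) * ((m : ℝ) + 1) / 2 + 1) →
        2 * δ / Δ < (n : ℝ) / (2 * gamT B + (m : ℝ) * ((m : ℝ) - 1)) -
          ((m : ℝ) * ((m : ℝ) + 1) / 2 + 1) →
        Summable (fun q : ℕ =>
          (((q : ℝ)) ^ (m * n))⁻¹ * ∑ a ∈ resid m (q : ℤ), ‖Saq A (q : ℤ) a (bvec B)‖) ∧
        ‖Sing A B - SingT A B (PiP C B ^ Δ)‖ ≤ K * PiP C B ^ (-2 * δ + ε) := by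
  have hA : A.det ≠ 0 := by
    have h := hApd.det_pos
    rw [← Int.cast_det] at h
    exact_mod_cast h.ne'
  set c : ℕ := A.det.natAbs ^ (m * n) * 2 ^ n with hc
  set R : ℝ := (m : ℝ) * ((m : ℝ) + 1) / 2 with hR
  set κ : ℝ := 2 * δ / Δ with hκ
  have hκ0 : 0 < κ := by positivity
  set ρ : ℝ := (n : ℝ) / 2 - R - 1 - κ with hρ
  refine ⟨c * (∑' q : ℕ, (q : ℝ) ^ (-1 - ρ)) + 1, by positivity, ?_⟩
  intro B _ _ hB _ h2 _ hδ
  have hρ0 : 0 < ρ := by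
    have hm : (1 : ℝ) ≤ m := by exact_mod_cast NeZero.one_le
    have hw : 2 ≤ 2 * gamT B + (m : ℝ) * ((m : ℝ) - 1) := by
      nlinarith [le_gamT hB h2, mul_nonneg (zero_le_one.trans hm) (sub_nonneg.2 hm)]
    have := div_le_div_of_nonneg_left (Nat.cast_nonneg (α := ℝ) n) two_pos hw
    linarith
  have hexp : R - (n : ℝ) / 2 = -1 - ρ - κ := by rw [hρ]; ring
  have hterm := sum_norm_Saq_le A hAs hA (bvec B)
  rw [← hR, hexp] at hterm
  refine ⟨Summable.of_nonneg_of_le (fun q => by positivity) hterm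
    ((Real.summable_nat_rpow.2 (by linarith)).mul_left _), ?_⟩
  have hP := one_le_PiP hC hB h2
  have hP0 : 0 < PiP C B := by linarith
  have h0 : STerm A B 0 = 0 := by
    simp [STerm, NeZero.ne m, NeZero.ne n]
  refine (norm_tsum_sub_sum_Icc_le (Nat.cast_nonneg c) hρ0 hκ0.le (Real.rpow_pos_of_pos hP0 Δ) h0
    fun q => (norm_STerm_le A B q).trans (hterm q)).trans ?_
  have hpow : (PiP C B ^ Δ) ^ (-κ) = PiP C B ^ (-2 * δ) := by
    rw [← Real.rpow_mul hP0.le]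
    congr 1
    rw [hκ]
    field_simp
  rw [hpow]
  gcongr
  · linarith
  · linarith
end
end

section
/- Assume n > (2γ + m(m−1))(R+1). Then the singular integral 𝔍(c) = ∫_{ℝ^R} I(η)·e(−Σ_{1≤i≤j≤m} η_{ij}c_{ij}) dη converges absolutely, and for any ε > 0 there is a constant K (depending only on A, m, n, ε) such that for every Q ≥ 1, |𝔍(c) − 𝔍(Q; c)| ≤ K·Q^{−1+ε}, uniformly in c ∈ ℝ^R. -/
open scoped BigOperators
open MeasureTheory Matrix Filter

noncomputable section

section Auxiliary

lemma norm_eR (z : ℝ) : ‖eR z‖ = 1 := by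
  rw [eR, Complex.norm_exp]
  simp

lemma eR_add (x y : ℝ) : eR (x + y) = eR x * eR y := by
  simp only [eR, ← Complex.exp_add]
  push_cast
  ring_nf

lemma eR_sum {ι : Type*} (s : Finset ι) (f : ι → ℝ) :
    eR (∑ i ∈ s, f i) = ∏ i ∈ s, eR (f i) := by
  simp only [eR, ← Complex.exp_sum]
  push_cast
  rw [Finset.mul_sum]

lemma conj_eR (x : ℝ) : (starRingEnd ℂ) (eR x) = eR (-x) := by
  rw [eR, ← Complex.exp_conj, eR]
  have h2 : (starRingEnd ℂ) 2 = 2 := Complex.conj_ofNat 2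
  simp [h2]

lemma continuous_eR : Continuous eR := by
  unfold eR
  fun_prop

/-- The oscillatory integral of `e(gx)` over an interval of length at most `2`. -/
lemma norm_setIntegral_eR_le (a b g : ℝ) (hab : b - a ≤ 2) :
    ‖∫ x in Set.Icc a b, eR (x * g)‖ ≤ 4 / (1 + |g|) := by
  rcases lt_or_ge b a with h | h
  · rw [Set.Icc_eq_empty (not_le.2 h)]
    simp
    positivity
  rw [integral_Icc_eq_integral_Ioc, ← intervalIntegral.integral_of_le h]
  rcases le_or_gt |g| 1 with hg | hg
  · have h1 : ‖∫ x in a..b, eR (x * g)‖ ≤ 1 * |b - a| :=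
      intervalIntegral.norm_integral_le_of_norm_le_const fun x _ => (norm_eR _).le
    rw [abs_of_nonneg (by linarith)] at h1
    refine h1.trans ?_
    rw [le_div_iff₀ (by positivity)]
    nlinarith [abs_nonneg g]
  · have hg0 : g ≠ 0 := by
      rintro rfl
      norm_num at hg
    have hc : (2 * Real.pi * Complex.I * g : ℂ) ≠ 0 := by
      simp [hg0, Real.pi_ne_zero]
    have h1 : ∀ x : ℝ, eR (x * g) = Complex.exp ((2 * Real.pi * Complex.I * g) * x) := by
      intro x
      rw [eR]
      push_cast
      ring_nf
    have h2 : ∀ x : ℝ, ‖Complex.exp ((2 * Real.pi * Complex.I * g) * x)‖ = 1 := by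
      intro x
      rw [← h1, norm_eR]
    simp_rw [h1]
    rw [integral_exp_mul_complex hc, norm_div]
    have h3 : ‖(2 * Real.pi * Complex.I * g : ℂ)‖ = 2 * Real.pi * |g| := by
      simp [abs_of_pos Real.pi_pos]
    rw [h3]
    calc _ ≤ 2 / (2 * Real.pi * |g|) := by
          gcongr
          refine (norm_sub_le _ _).trans ?_
          rw [h2, h2]
          norm_num
      _ ≤ 4 / (1 + |g|) := by
          rw [div_le_div_iff₀ (by positivity) (by positivity)]
          nlinarith [Real.pi_gt_three]

/-- The one-dimensional factor of the differenced integrand. -/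
def diffFactor (h g : ℝ) : ℝ → ℂ :=
  (Set.Icc (-1) 1 ∩ {t | t - h ∈ Set.Icc (-1 : ℝ) 1}).indicator fun t => eR (t * g)

lemma diffFactor_eq (h g : ℝ) :
    diffFactor h g =
      (Set.Icc (max (-1) (-1 + h)) (min 1 (1 + h))).indicator fun t => eR (t * g) := by
  unfold diffFactor
  congr 1
  ext t
  simp only [Set.mem_inter_iff, Set.mem_Icc, Set.mem_ofPred_eq, max_le_iff, le_min_iff]
  constructor
  · rintro ⟨⟨h1, h2⟩, h3, h4⟩
    exact ⟨⟨h1, by linarith⟩, h2, by linarith⟩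
  · rintro ⟨⟨h1, h2⟩, h3, h4⟩
    exact ⟨⟨h1, h3⟩, by linarith, by linarith⟩

lemma norm_integral_diffFactor_le (h g : ℝ) :
    ‖∫ t, diffFactor h g t‖ ≤ 4 / (1 + |g|) := by
  rw [diffFactor_eq, integral_indicator measurableSet_Icc]
  apply norm_setIntegral_eR_le
  linarith [min_le_left 1 (1 + h), le_max_left (-1) (-1 + h)]

lemma integral_diffFactor_eq_zero {h : ℝ} (g : ℝ) (hh : h ∉ Set.Icc (-2 : ℝ) 2) :
    ∫ t, diffFactor h g t = 0 := by
  rw [diffFactor_eq, Set.Icc_eq_empty, Set.indicator_empty]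
  · simp
  · intro hle
    apply hh
    simp only [max_le_iff, le_min_iff] at hle
    constructor <;> linarith [hle.1.1, hle.1.2, hle.2.1, hle.2.2]

lemma div_one_add_le_rpow {θ : ℝ} (hθ : θ ≤ 1) (g : ℝ) :
    4 / (1 + |g|) ≤ 4 * (1 + |g|) ^ (-θ) := by
  rw [div_eq_mul_inv, ← Real.rpow_neg_one]
  have : (1 : ℝ) ≤ 1 + |g| := by linarith [abs_nonneg g]
  gcongr

lemma integrableOn_abs_rpow_neg {θ : ℝ} (hθ : θ < 1) :
    IntegrableOn (fun y : ℝ => |y| ^ (-θ)) (Set.Icc (-1) 1) := by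
  have h := intervalIntegral.intervalIntegrable_rpow' (a := 0) (b := 1) (r := -θ) (by linarith)
  have h1 : IntervalIntegrable (fun y : ℝ => |y| ^ (-θ)) volume 0 1 := by
    refine h.congr ?_
    intro y hy
    rw [Set.uIoc_of_le zero_le_one] at hy
    simp only [abs_of_pos hy.1]
  have h2 := ((IntervalIntegrable.iff_comp_neg (by simp)).1 h1).symm
  simp only [abs_neg, neg_zero] at h2
  rw [integrableOn_Icc_iff_integrableOn_Ioc,
    ← intervalIntegrable_iff_integrableOn_Ioc_of_le (by norm_num)]
  exact h2.trans h1

lemma measurable_one_add_abs_rpow (θ N c : ℝ) :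
    Measurable fun u : ℝ => (1 + |N * u + c|) ^ (-θ) := by
  fun_prop

lemma one_add_abs_rpow_le_one {θ : ℝ} (hθ : 0 ≤ θ) (x : ℝ) : (1 + |x|) ^ (-θ) ≤ 1 :=
  Real.rpow_le_one_of_one_le_of_nonpos (by linarith [abs_nonneg x]) (by linarith)

lemma integrableOn_one_add_abs_rpow {θ : ℝ} (hθ : 0 ≤ θ) (N c U : ℝ) :
    IntegrableOn (fun u : ℝ => (1 + |N * u + c|) ^ (-θ)) (Set.Icc (-U) U) := by
  refine Measure.integrableOn_of_bounded (M := 1) (by simp)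
    (measurable_one_add_abs_rpow θ N c).aestronglyMeasurable ?_
  refine Eventually.of_forall fun u => ?_
  rw [Real.norm_of_nonneg (by positivity)]
  exact one_add_abs_rpow_le_one hθ _

lemma exists_setIntegral_one_add_abs_rpow_le {θ : ℝ} (hθ0 : 0 ≤ θ) (hθ : θ < 1) {U : ℝ}
    (hU : 0 ≤ U) :
    ∃ C : ℝ, 0 ≤ C ∧ ∀ N c : ℝ, N ≠ 0 →
      ∫ u in Set.Icc (-U) U, (1 + |N * u + c|) ^ (-θ) ≤ C * |N| ^ (-θ) := by
  set G : ℝ → ℝ := (Set.Icc (-1) 1).indicator fun y : ℝ => |y| ^ (-θ) with hG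
  have hGi : Integrable G := (integrable_indicator_iff measurableSet_Icc).2
    (integrableOn_abs_rpow_neg hθ)
  have hG0 : ∀ y, 0 ≤ G y := fun y => Set.indicator_nonneg (fun _ _ => by positivity) _
  refine ⟨2 * U + ∫ y, G y, add_nonneg (by linarith) (integral_nonneg hG0), ?_⟩
  intro N c hN
  have hGc : Integrable fun u => G (u + c / N) := hGi.comp_add_right _
  have hpt : ∀ u : ℝ, u ≠ -(c / N) →
      (1 + |N * u + c|) ^ (-θ) ≤ |N| ^ (-θ) * (1 + G (u + c / N)) := by
    intro u hu
    have hy : u + c / N ≠ 0 := fun h => hu (by linarith)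
    have hy0 : 0 < |u + c / N| := abs_pos.2 hy
    have hN0 : 0 < |N| := abs_pos.2 hN
    have h1 : |N * u + c| = |N| * |u + c / N| := by
      rw [← abs_mul]
      congr 1
      field_simp
    rw [h1]
    calc (1 + |N| * |u + c / N|) ^ (-θ) ≤ (|N| * |u + c / N|) ^ (-θ) :=
          Real.rpow_le_rpow_of_nonpos (by positivity) (by linarith) (by linarith)
      _ = |N| ^ (-θ) * |u + c / N| ^ (-θ) := Real.mul_rpow hN0.le hy0.le
      _ ≤ _ := by
          gcongr
          by_cases hm : u + c / N ∈ Set.Icc (-1 : ℝ) 1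
          · rw [hG, Set.indicator_of_mem hm]
            linarith
          · have : 1 ≤ |u + c / N| := by
              by_contra hlt
              exact hm (Set.mem_Icc.2 (abs_le.1 (not_le.1 hlt).le))
            exact (Real.rpow_le_one_of_one_le_of_nonpos this (by linarith)).trans
              (by linarith [hG0 (u + c / N)])
  have hae : ∀ᵐ u : ℝ, u ≠ -(c / N) := by
    simp [ae_iff]
  calc _ ≤ ∫ u in Set.Icc (-U) U, |N| ^ (-θ) * (1 + G (u + c / N)) := by
        refine integral_mono_ae (integrableOn_one_add_abs_rpow hθ0 N c U) ?_ ?_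
        · exact ((integrable_const _).add hGc.integrableOn).const_mul _
        · exact ae_restrict_of_ae (hae.mono hpt)
    _ = |N| ^ (-θ) * (2 * U + ∫ u in Set.Icc (-U) U, G (u + c / N)) := by
        rw [integral_const_mul, integral_add (integrable_const _) hGc.integrableOn]
        congr 2
        simp [hU]
        ring
    _ ≤ |N| ^ (-θ) * (2 * U + ∫ u, G (u + c / N)) := by
        gcongr
        · exact Eventually.of_forall fun u => hG0 _
        · exact Measure.restrict_le_self
    _ = _ := by
        rw [integral_add_right_eq_self (fun y => G y), mul_comm]

/-- The cube `[-2, 2]ⁿ`. -/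
def cubeTwo (n : ℕ) : Set (Fin n → ℝ) := Set.univ.pi fun _ => Set.Icc (-2 : ℝ) 2

lemma measurableSet_cubeTwo (n : ℕ) : MeasurableSet (cubeTwo n) :=
  MeasurableSet.univ_pi fun _ => measurableSet_Icc

lemma volume_cubeTwo (n : ℕ) : volume (cubeTwo n) = 4 ^ n := by
  rw [cubeTwo, volume_pi_pi]
  simp only [Real.volume_Icc, Finset.prod_const, Finset.card_univ, Fintype.card_fin]
  norm_num

lemma setLIntegral_pi_prod_eq {n : ℕ} {s : Set ℝ} (f : Fin n → ℝ → ℝ) (hf0 : ∀ i u, 0 ≤ f i u)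
    (hf : ∀ i, IntegrableOn (f i) s) :
    ∫⁻ y in (Set.univ.pi fun _ : Fin n => s), ENNReal.ofReal (∏ i, f i (y i)) =
      ENNReal.ofReal (∏ i, ∫ u in s, f i u) := by
  rw [volume_pi, Measure.restrict_pi_pi, ← integral_fintype_prod_eq_prod (𝕜 := ℝ),
    ofReal_integral_eq_lintegral_ofReal]
  · exact Integrable.fintype_prod_dep hf
  · exact Eventually.of_forall fun y => Finset.prod_nonneg fun i _ => hf0 i _

lemma exists_setLIntegral_prod_mulVec_le {n : ℕ} (M : Matrix (Fin n) (Fin n) ℝ) (hM : M.det ≠ 0)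
    {θ : ℝ} (hθ0 : 0 ≤ θ) (hθ : θ < 1) :
    ∃ C : ℝ, 0 ≤ C ∧ ∀ (N : ℝ) (c : Fin n → ℝ), N ≠ 0 →
      ∫⁻ t in cubeTwo n, ENNReal.ofReal (∏ s, (1 + |N * (M *ᵥ t) s + c s|) ^ (-θ)) ≤
        ENNReal.ofReal (C * (|N| ^ (-θ)) ^ n) := by
  set U : ℝ := ∑ s, ∑ k, |M s k| * 2 with hUdef
  have hU : 0 ≤ U := by positivity
  obtain ⟨C, hC0, hC⟩ := exists_setIntegral_one_add_abs_rpow_le hθ0 hθ hU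
  refine ⟨|M.det⁻¹| * C ^ n, by positivity, fun N c hN => ?_⟩
  set f : Fin n → ℝ → ℝ := fun s u => (1 + |N * u + c s|) ^ (-θ) with hf
  have hf0 : ∀ s u, 0 ≤ f s u := fun s u => by positivity
  have hfm : Measurable fun y : Fin n → ℝ => ENNReal.ofReal (∏ s, f s (y s)) := by
    refine ENNReal.measurable_ofReal.comp (Finset.measurable_prod _ fun s _ => ?_)
    exact (measurable_one_add_abs_rpow θ N (c s)).comp (measurable_pi_apply s)
  have hMm : Measurable (Matrix.toLin' M) :=
    (LinearMap.continuous_of_finiteDimensional _).measurable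
  have hsub : cubeTwo n ⊆
      Matrix.toLin' M ⁻¹' (Set.univ.pi fun _ : Fin n => Set.Icc (-U) U) := by
    intro t ht s _
    change Matrix.toLin' M t s ∈ Set.Icc (-U) U
    rw [Matrix.toLin'_apply, Set.mem_Icc, ← abs_le]
    calc |(M *ᵥ t) s| ≤ ∑ k, |M s k * t k| := by
          rw [mulVec, dotProduct]
          exact Finset.abs_sum_le_sum_abs _ _
      _ ≤ ∑ k, |M s k| * 2 := by
          gcongr with k
          rw [abs_mul]
          gcongr
          exact abs_le.2 (ht k (Set.mem_univ k))
      _ ≤ U := Finset.single_le_sum (f := fun s => ∑ k, |M s k| * 2)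
          (fun s _ => by positivity) (Finset.mem_univ s)
  calc ∫⁻ t in cubeTwo n, ENNReal.ofReal (∏ s, (1 + |N * (M *ᵥ t) s + c s|) ^ (-θ))
      ≤ ∫⁻ t in Matrix.toLin' M ⁻¹' (Set.univ.pi fun _ : Fin n => Set.Icc (-U) U),
          ENNReal.ofReal (∏ s, f s (Matrix.toLin' M t s)) := lintegral_mono_set hsub
    _ = ENNReal.ofReal |M.det⁻¹| * ENNReal.ofReal (∏ s, ∫ u in Set.Icc (-U) U, f s u) := by
        rw [← setLIntegral_map (MeasurableSet.univ_pi fun _ => measurableSet_Icc) hfm hMm,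
          Real.map_matrix_volume_pi_eq_smul_volume_pi hM, Measure.restrict_smul,
          lintegral_smul_measure, setLIntegral_pi_prod_eq f hf0, smul_eq_mul]
        exact fun s => integrableOn_one_add_abs_rpow hθ0 N (c s) U
    _ ≤ _ := by
        rw [← ENNReal.ofReal_mul (abs_nonneg _), mul_assoc, ← mul_pow]
        apply ENNReal.ofReal_le_ofReal
        gcongr
        refine (Finset.prod_le_prod (fun s _ => integral_nonneg (hf0 s))
          fun s _ => hC N (c s) hN).trans_eq ?_
        simp

/-- Weyl differencing: the square of an integral is bounded by its autocorrelation. -/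
lemma enorm_integral_sq_le {E : Type*} [AddCommGroup E] [MeasurableSpace E]
    [MeasurableAdd₂ E] [MeasurableNeg E] (μ : Measure E) [SFinite μ] [μ.IsAddRightInvariant]
    [μ.IsNegInvariant] {F : E → ℂ} (hF : Integrable F μ) :
    ‖∫ t, F t ∂μ‖ₑ ^ 2 ≤ ∫⁻ x, ‖∫ t, F t * (starRingEnd ℂ) (F (t - x)) ∂μ‖ₑ ∂μ := by
  have hG : Integrable (fun x => (starRingEnd ℂ) (F (-x))) μ := by
    have h := Complex.conjLIE.integrable_comp_iff.2 hF.comp_neg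
    simpa [Function.comp_def] using h
  have h := integral_convolution (μ := μ) (ν := μ) (ContinuousLinearMap.mul ℂ ℂ) hF hG
  have h2 : ∫ x, (starRingEnd ℂ) (F (-x)) ∂μ = (starRingEnd ℂ) (∫ x, F x ∂μ) := by
    rw [integral_neg_eq_self (fun x => (starRingEnd ℂ) (F x)) μ, integral_conj]
  rw [h2] at h
  have h3 : ‖∫ t, F t ∂μ‖ₑ ^ 2 =
      ‖(ContinuousLinearMap.mul ℂ ℂ) (∫ t, F t ∂μ) ((starRingEnd ℂ) (∫ t, F t ∂μ))‖ₑ := by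
    rw [ContinuousLinearMap.mul_apply', enorm_mul, sq]
    congr 1
    simp only [← ofReal_norm, RCLike.norm_conj]
  rw [h3, ← h]
  refine (enorm_integral_le_lintegral_enorm _).trans_eq ?_
  simp only [convolution_def, ContinuousLinearMap.mul_apply', neg_sub]

variable {m n : ℕ}

/-- Extension by zero of an upper triangular family to all pairs of indices. -/
def upperExt (η : Idx m → ℝ) (k j : Fin m) : ℝ := if h : k ≤ j then η ⟨(k, j), h⟩ else 0

/-- The coefficients of the polar form of `∑ η_{ij} x_i x_j`. -/
def polarCoeff (η : Idx m → ℝ) (k j : Fin m) : ℝ := upperExt η k j + upperExt η j k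

lemma sum_idx_eq (η : Idx m → ℝ) (F : Fin m → Fin m → ℝ) :
    ∑ p : Idx m, η p * F p.1.1 p.1.2 = ∑ k, ∑ j, upperExt η k j * F k j := by
  rw [← Fintype.sum_prod_type' (f := fun k j => upperExt η k j * F k j),
    ← Fintype.sum_subtype_add_sum_subtype (fun p : Fin m × Fin m => p.1 ≤ p.2),
    Finset.sum_eq_zero (s := (Finset.univ : Finset {p : Fin m × Fin m // ¬ p.1 ≤ p.2})), add_zero]
  · refine Finset.sum_congr rfl fun p _ => ?_
    rw [upperExt, dif_pos p.2]
  · intro p _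
    rw [upperExt, dif_neg p.2, zero_mul]

lemma abs_le_abs_polarCoeff (η : Idx m → ℝ) (p : Idx m) :
    |η p| ≤ |polarCoeff η p.1.1 p.1.2| := by
  obtain ⟨⟨i, j⟩, h⟩ := p
  change i ≤ j at h
  simp only [polarCoeff, upperExt, dif_pos h]
  rcases h.eq_or_lt with rfl | hlt
  · rw [dif_pos le_rfl, ← two_mul, abs_mul]
    norm_num
    linarith [abs_nonneg (η ⟨(i, i), h⟩)]
  · rw [dif_neg (not_le.2 hlt), add_zero]

/-- The phase of the oscillatory integral. -/
def phase (A : Matrix (Fin n) (Fin n) ℤ) (η : Idx m → ℝ) (v : Fin m → Fin n → ℝ) : ℝ :=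
  ∑ p : Idx m, η p * quadR A v p.1.1 p.1.2

/-- The gradient of the phase at `h`. -/
def phaseGrad (A : Matrix (Fin n) (Fin n) ℤ) (η : Idx m → ℝ) (h : Fin m → Fin n → ℝ)
    (k : Fin m) (s : Fin n) : ℝ :=
  ∑ j, polarCoeff η k j * (A.map ((↑) : ℤ → ℝ) *ᵥ h j) s

lemma quadR_eq_dotProduct (A : Matrix (Fin n) (Fin n) ℤ) (v : Fin m → Fin n → ℝ) (i j : Fin m) :
    quadR A v i j = v i ⬝ᵥ (A.map ((↑) : ℤ → ℝ) *ᵥ v j) := by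
  simp only [quadR, dotProduct, mulVec, Matrix.map_apply, Finset.mul_sum, mul_assoc]

lemma phase_sub_phase (A : Matrix (Fin n) (Fin n) ℤ) (hA : A.IsSymm) (η : Idx m → ℝ)
    (t x : Fin m → Fin n → ℝ) :
    phase A η t - phase A η (t - x) =
      -phase A η x + ∑ k, ∑ s, t k s * phaseGrad A η x k s := by
  have hsymm : ∀ v w : Fin n → ℝ, v ⬝ᵥ (A.map ((↑) : ℤ → ℝ) *ᵥ w) =
      w ⬝ᵥ (A.map ((↑) : ℤ → ℝ) *ᵥ v) := by
    intro v w
    have hAr : (A.map ((↑) : ℤ → ℝ))ᵀ = A.map ((↑) : ℤ → ℝ) := by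
      rw [← Matrix.transpose_map, hA.eq]
    rw [dotProduct_mulVec, ← mulVec_transpose, hAr, dotProduct_comm]
  have hgrad : ∑ k, ∑ s, t k s * phaseGrad A η x k s =
      ∑ k, ∑ j, polarCoeff η k j * (t k ⬝ᵥ (A.map ((↑) : ℤ → ℝ) *ᵥ x j)) := by
    refine Finset.sum_congr rfl fun k _ => ?_
    simp only [phaseGrad, dotProduct, Finset.mul_sum]
    rw [Finset.sum_comm]
    refine Finset.sum_congr rfl fun j _ => Finset.sum_congr rfl fun s _ => ?_
    ring
  have hpolar : ∑ k, ∑ j, polarCoeff η k j * (t k ⬝ᵥ (A.map ((↑) : ℤ → ℝ) *ᵥ x j)) =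
      ∑ k, ∑ j, upperExt η k j * (t k ⬝ᵥ (A.map ((↑) : ℤ → ℝ) *ᵥ x j) +
        x k ⬝ᵥ (A.map ((↑) : ℤ → ℝ) *ᵥ t j)) := by
    simp only [polarCoeff, add_mul, mul_add, Finset.sum_add_distrib]
    congr 1
    rw [Finset.sum_comm]
    refine Finset.sum_congr rfl fun j _ => Finset.sum_congr rfl fun k _ => ?_
    rw [hsymm]
  rw [hgrad, hpolar]
  have hphase : ∀ v : Fin m → Fin n → ℝ, phase A η v =
      ∑ k, ∑ j, upperExt η k j * (v k ⬝ᵥ (A.map ((↑) : ℤ → ℝ) *ᵥ v j)) := by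
    intro v
    rw [phase, sum_idx_eq η fun i j => quadR A v i j]
    simp only [quadR_eq_dotProduct]
  rw [hphase, hphase, hphase, ← Finset.sum_sub_distrib, ← Finset.sum_neg_distrib,
    ← Finset.sum_add_distrib]
  refine Finset.sum_congr rfl fun k _ => ?_
  rw [← Finset.sum_sub_distrib, ← Finset.sum_neg_distrib, ← Finset.sum_add_distrib]
  refine Finset.sum_congr rfl fun j _ => ?_
  simp only [Pi.sub_apply, mulVec_sub, dotProduct_sub, sub_dotProduct]
  ring

lemma continuous_phase (A : Matrix (Fin n) (Fin n) ℤ) :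
    Continuous fun z : (Idx m → ℝ) × (Fin m → Fin n → ℝ) => phase A z.1 z.2 := by
  unfold phase quadR
  fun_prop

/-- The cube `[-1, 1]^{mn}`. -/
def unitCube (m n : ℕ) : Set (Fin m → Fin n → ℝ) :=
  Set.univ.pi fun _ : Fin m => Set.univ.pi fun _ : Fin n => Set.Icc (-1 : ℝ) 1

lemma isCompact_unitCube (m n : ℕ) : IsCompact (unitCube m n) :=
  isCompact_univ_pi fun _ => isCompact_univ_pi fun _ => isCompact_Icc

lemma mem_unitCube {v : Fin m → Fin n → ℝ} :
    v ∈ unitCube m n ↔ ∀ k s, v k s ∈ Set.Icc (-1 : ℝ) 1 := by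
  simp only [unitCube, Set.mem_pi, Set.mem_univ, true_imp_iff]

lemma continuous_Iint (A : Matrix (Fin n) (Fin n) ℤ) :
    Continuous fun η : Idx m → ℝ => Iint A η :=
  continuous_parametric_integral_of_continuous
    (f := fun (η : Idx m → ℝ) (v : Fin m → Fin n → ℝ) => eR (phase A η v))
    (continuous_eR.comp (continuous_phase A)) (isCompact_unitCube m n)

lemma norm_Iint_le (A : Matrix (Fin n) (Fin n) ℤ) (η : Idx m → ℝ) :
    ‖Iint A η‖ ≤ volume.real (unitCube m n) := by
  have h := norm_setIntegral_le_of_norm_le_const (μ := volume) (s := unitCube m n)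
    (f := fun v => eR (phase A η v)) (C := 1) (isCompact_unitCube m n).measure_lt_top
    fun v _ => (norm_eR _).le
  rwa [one_mul] at h

lemma indicator_mul_conj_indicator (A : Matrix (Fin n) (Fin n) ℤ) (hA : A.IsSymm)
    (η : Idx m → ℝ) (t x : Fin m → Fin n → ℝ) :
    (unitCube m n).indicator (fun v => eR (phase A η v)) t *
        (starRingEnd ℂ) ((unitCube m n).indicator (fun v => eR (phase A η v)) (t - x)) =
      eR (-phase A η x) * ∏ k, ∏ s, diffFactor (x k s) (phaseGrad A η x k s) (t k s) := by
  by_cases h : t ∈ unitCube m n ∧ t - x ∈ unitCube m n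
  · rw [Set.indicator_of_mem h.1, Set.indicator_of_mem h.2, conj_eR, ← eR_add, ← sub_eq_add_neg,
      phase_sub_phase A hA, eR_add, eR_sum]
    congr 1
    refine Finset.prod_congr rfl fun k _ => ?_
    rw [eR_sum]
    refine Finset.prod_congr rfl fun s _ => ?_
    rw [diffFactor, Set.indicator_of_mem]
    exact ⟨mem_unitCube.1 h.1 k s, mem_unitCube.1 h.2 k s⟩
  · have hzero : ∏ k, ∏ s, diffFactor (x k s) (phaseGrad A η x k s) (t k s) = 0 := by
      by_contra hne
      apply h
      have hmem : ∀ k s, t k s ∈ Set.Icc (-1 : ℝ) 1 ∩ {u | u - x k s ∈ Set.Icc (-1 : ℝ) 1} :=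
        fun k s => Set.mem_of_indicator_ne_zero <|
          Finset.prod_ne_zero_iff.1 (Finset.prod_ne_zero_iff.1 hne k (Finset.mem_univ k)) s
            (Finset.mem_univ s)
      exact ⟨mem_unitCube.2 fun k s => (hmem k s).1, mem_unitCube.2 fun k s => (hmem k s).2⟩
    rw [hzero, mul_zero]
    by_cases h1 : t ∈ unitCube m n
    · rw [Set.indicator_of_notMem (a := t - x) fun h2 => h ⟨h1, h2⟩, map_zero, mul_zero]
    · rw [Set.indicator_of_notMem h1, zero_mul]

lemma integral_prod_diffFactor (h g : Fin m → Fin n → ℝ) :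
    ∫ t : Fin m → Fin n → ℝ, ∏ k, ∏ s, diffFactor (h k s) (g k s) (t k s) =
      ∏ k, ∏ s, ∫ u, diffFactor (h k s) (g k s) u := by
  rw [integral_fintype_prod_volume_eq_prod (𝕜 := ℂ)
    (fun k (y : Fin n → ℝ) => ∏ s, diffFactor (h k s) (g k s) (y s))]
  refine Finset.prod_congr rfl fun k _ => ?_
  exact integral_fintype_prod_volume_eq_prod (𝕜 := ℂ) fun s => diffFactor (h k s) (g k s)

lemma prod_le_single {ι : Type*} [Fintype ι] [DecidableEq ι] {b : ι → ℝ} (h0 : ∀ k, 0 ≤ b k)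
    (h1 : ∀ k, b k ≤ 1) (i : ι) : ∏ k, b k ≤ b i := by
  rw [← Finset.mul_prod_erase _ _ (Finset.mem_univ i)]
  exact mul_le_of_le_one_right (h0 i) (Finset.prod_le_one (fun k _ => h0 k) fun k _ => h1 k)

lemma norm_prod_integral_diffFactor_le {θ : ℝ} (hθ0 : 0 ≤ θ) (hθ : θ ≤ 1)
    (h g : Fin m → Fin n → ℝ) (i : Fin m) :
    ‖∏ k, ∏ s, ∫ u, diffFactor (h k s) (g k s) u‖ ≤
      4 ^ (n * m) * ∏ s, (1 + |g i s|) ^ (-θ) := by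
  rw [norm_prod]
  calc _ ≤ ∏ k, (4 ^ n * ∏ s, (1 + |g k s|) ^ (-θ)) := by
        refine Finset.prod_le_prod (fun _ _ => norm_nonneg _) fun k _ => ?_
        rw [norm_prod]
        calc _ ≤ ∏ s, (4 * (1 + |g k s|) ^ (-θ)) :=
              Finset.prod_le_prod (fun _ _ => norm_nonneg _) fun s _ =>
                (norm_integral_diffFactor_le _ _).trans (div_one_add_le_rpow hθ _)
          _ = _ := by simp [Finset.prod_mul_distrib]
    _ = 4 ^ (n * m) * ∏ k, ∏ s, (1 + |g k s|) ^ (-θ) := by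
        simp [Finset.prod_mul_distrib, pow_mul]
    _ ≤ _ := by
        gcongr
        exact prod_le_single (b := fun k => ∏ s, (1 + |g k s|) ^ (-θ))
          (fun k => by positivity)
          (fun k => Finset.prod_le_one (fun s _ => by positivity)
            fun s _ => one_add_abs_rpow_le_one hθ0 _) i

/-- The differenced integral is supported in `[-2, 2]^{mn}` and decays with the gradient. -/
lemma enorm_autocorrelation_le {θ : ℝ} (hθ0 : 0 ≤ θ) (hθ : θ ≤ 1)
    (A : Matrix (Fin n) (Fin n) ℤ) (hA : A.IsSymm) (η : Idx m → ℝ) (i : Fin m)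
    (x : Fin m → Fin n → ℝ) :
    ‖∫ t, (unitCube m n).indicator (fun v => eR (phase A η v)) t *
        (starRingEnd ℂ) ((unitCube m n).indicator (fun v => eR (phase A η v)) (t - x))‖ₑ ≤
      (Set.univ.pi fun _ : Fin m => cubeTwo n).indicator
        (fun x => ENNReal.ofReal (4 ^ (n * m) * ∏ s, (1 + |phaseGrad A η x i s|) ^ (-θ))) x := by
  simp_rw [indicator_mul_conj_indicator A hA]
  rw [integral_const_mul, integral_prod_diffFactor, ← ofReal_norm, norm_mul, norm_eR, one_mul]
  by_cases hx : x ∈ Set.univ.pi fun _ : Fin m => cubeTwo n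
  · rw [Set.indicator_of_mem hx]
    exact ENNReal.ofReal_le_ofReal (norm_prod_integral_diffFactor_le hθ0 hθ _ _ i)
  · rw [Set.indicator_of_notMem hx]
    simp only [cubeTwo, Set.mem_pi, Set.mem_univ, true_imp_iff, not_forall] at hx
    obtain ⟨k, s, hks⟩ := hx
    rw [Finset.prod_eq_zero (Finset.mem_univ k) (Finset.prod_eq_zero (Finset.mem_univ s)
      (integral_diffFactor_eq_zero _ hks))]
    simp

lemma phaseGrad_update (A : Matrix (Fin n) (Fin n) ℤ) (η : Idx m → ℝ) (x : Fin m → Fin n → ℝ)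
    (i j : Fin m) (t : Fin n → ℝ) (s : Fin n) :
    phaseGrad A η (Function.update x j t) i s =
      polarCoeff η i j * (A.map ((↑) : ℤ → ℝ) *ᵥ t) s +
        ∑ k ∈ Finset.univ.erase j, polarCoeff η i k * (A.map ((↑) : ℤ → ℝ) *ᵥ x k) s := by
  rw [phaseGrad, ← Finset.add_sum_erase _ _ (Finset.mem_univ j), Function.update_self]
  congr 1
  refine Finset.sum_congr rfl fun k hk => ?_
  rw [Function.update_of_ne (Finset.ne_of_mem_erase hk)]

lemma measurable_prod_phaseGrad (θ : ℝ) (A : Matrix (Fin n) (Fin n) ℤ) (η : Idx m → ℝ)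
    (i : Fin m) :
    Measurable fun x : Fin m → Fin n → ℝ => ∏ s, (1 + |phaseGrad A η x i s|) ^ (-θ) := by
  unfold phaseGrad mulVec dotProduct
  fun_prop

lemma exists_norm_Iint_sq_le {θ : ℝ} (hθ0 : 0 ≤ θ) (hθ : θ < 1)
    (A : Matrix (Fin n) (Fin n) ℤ) (hA : A.IsSymm) (hdet : (A.map ((↑) : ℤ → ℝ)).det ≠ 0) :
    ∃ C : ℝ, 0 ≤ C ∧ ∀ (η : Idx m → ℝ) (i j : Fin m), polarCoeff η i j ≠ 0 →
      ‖Iint A η‖ ^ 2 ≤ C * (|polarCoeff η i j| ^ (-θ)) ^ n := by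
  obtain ⟨C, hC0, hC⟩ := exists_setLIntegral_prod_mulVec_le _ hdet hθ0 hθ
  refine ⟨(4 ^ n) ^ m * (4 ^ (n * m) * C), by positivity, fun η i j hij => ?_⟩
  set T : ℝ := (|polarCoeff η i j| ^ (-θ)) ^ n with hT
  have hT0 : 0 ≤ T := by positivity
  have hFi : Integrable ((unitCube m n).indicator fun v => eR (phase A η v)) := by
    rw [integrable_indicator_iff (isCompact_unitCube m n).measurableSet]
    refine ContinuousOn.integrableOn_compact (isCompact_unitCube m n) (Continuous.continuousOn ?_)
    exact continuous_eR.comp ((continuous_phase A).comp (by fun_prop :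
      Continuous fun v : Fin m → Fin n → ℝ => (η, v)))
  have hI : Iint A η = ∫ t, (unitCube m n).indicator (fun v => eR (phase A η v)) t := by
    rw [integral_indicator (isCompact_unitCube m n).measurableSet]
    rfl
  set Φ : (Fin m → Fin n → ℝ) → ENNReal := fun x =>
    ENNReal.ofReal (4 ^ (n * m) * ∏ s, (1 + |phaseGrad A η x i s|) ^ (-θ)) with hΦ
  have hΦm : Measurable Φ :=
    ENNReal.measurable_ofReal.comp ((measurable_prod_phaseGrad θ A η i).const_mul _)
  have hinner : ∀ x : Fin m → Fin n → ℝ, ∫⁻ t in cubeTwo n, Φ (Function.update x j t) ≤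
      ∫⁻ _ in cubeTwo n, ENNReal.ofReal (4 ^ (n * m) * (C * T)) := by
    intro x
    rw [setLIntegral_const, volume_cubeTwo]
    simp only [hΦ, phaseGrad_update, ENNReal.ofReal_mul (show (0 : ℝ) ≤ 4 ^ (n * m) by positivity)]
    rw [lintegral_const_mul' _ _ ENNReal.ofReal_ne_top]
    refine (mul_le_mul_right (hC _ _ hij) _).trans ?_
    exact le_mul_of_one_le_right zero_le (one_le_pow₀ (by norm_num))
  have hmain : ‖Iint A η‖ₑ ^ 2 ≤ ENNReal.ofReal ((4 ^ n) ^ m * (4 ^ (n * m) * (C * T))) := by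
    rw [hI]
    calc _ ≤ ∫⁻ x, (Set.univ.pi fun _ : Fin m => cubeTwo n).indicator Φ x :=
          (enorm_integral_sq_le volume hFi).trans
            (lintegral_mono fun x => enorm_autocorrelation_le hθ0 hθ.le A hA η i x)
      _ = ∫⁻ x, Φ x ∂Measure.pi fun _ : Fin m => volume.restrict (cubeTwo n) := by
          rw [lintegral_indicator (MeasurableSet.univ_pi fun _ => measurableSet_cubeTwo n),
            volume_pi, Measure.restrict_pi_pi]
      _ ≤ ∫⁻ _, ENNReal.ofReal (4 ^ (n * m) * (C * T))
            ∂Measure.pi fun _ : Fin m => volume.restrict (cubeTwo n) := by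
          refine lintegral_le_of_lmarginal_le {j} hΦm measurable_const ?_
          rw [lmarginal_singleton, lmarginal_singleton]
          exact hinner
      _ = _ := by
          rw [lintegral_const, Measure.pi_univ, mul_comm,
            ENNReal.ofReal_mul (p := (4 ^ n) ^ m) (by positivity)]
          simp only [Measure.restrict_apply_univ, volume_cubeTwo, Finset.prod_const,
            Finset.card_univ, Fintype.card_fin]
          congr 1
          rw [ENNReal.ofReal_pow (by positivity), ENNReal.ofReal_pow (by positivity)]
          norm_num
  rw [← ofReal_norm, ← ENNReal.ofReal_pow (norm_nonneg _),
    ENNReal.ofReal_le_ofReal_iff (by positivity)] at hmain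
  linarith

lemma exists_norm_Iint_le_rpow [NeZero m] {θ : ℝ} (hθ0 : 0 ≤ θ) (hθ : θ < 1)
    (A : Matrix (Fin n) (Fin n) ℤ) (hA : A.IsSymm) (hdet : (A.map ((↑) : ℤ → ℝ)).det ≠ 0) :
    ∃ C : ℝ, 0 ≤ C ∧ ∀ η : Idx m → ℝ,
      ‖Iint A η‖ ≤ C * (1 + ‖η‖) ^ (-(θ * n / 2)) := by
  obtain ⟨C, hC0, hC⟩ := exists_norm_Iint_sq_le (m := m) hθ0 hθ A hA hdet
  set r : ℝ := θ * n / 2 with hr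
  have hr0 : 0 ≤ r := by positivity
  set V : ℝ := volume.real (unitCube m n)
  have hV0 : 0 ≤ V := measureReal_nonneg
  refine ⟨(V + √C) * 2 ^ r, by positivity, fun η => ?_⟩
  have hsplit : (2 : ℝ) ^ r * (1 + ‖η‖) ^ (-r) = ((1 + ‖η‖) / 2) ^ (-r) := by
    rw [Real.div_rpow (by positivity) (by norm_num), Real.rpow_neg (x := 2) (by norm_num),
      div_inv_eq_mul, mul_comm]
  rw [mul_assoc, hsplit]
  rcases lt_or_ge ‖η‖ 1 with h1 | h1
  · have h2 : 1 ≤ ((1 + ‖η‖) / 2) ^ (-r) :=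
      Real.one_le_rpow_of_pos_of_le_one_of_nonpos (by positivity) (by linarith) (by linarith)
    calc ‖Iint A η‖ ≤ V := norm_Iint_le A η
      _ ≤ V + √C := by linarith [Real.sqrt_nonneg C]
      _ ≤ _ := le_mul_of_one_le_right (by positivity) h2
  · obtain ⟨p, hp⟩ := Finite.exists_max fun p : Idx m => |η p|
    have hnorm : ‖η‖ ≤ |polarCoeff η p.1.1 p.1.2| :=
      ((pi_norm_le_iff_of_nonneg (abs_nonneg _)).2 hp).trans (abs_le_abs_polarCoeff η p)
    have hpos : 0 < |polarCoeff η p.1.1 p.1.2| := by linarith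
    have h2 := hC η p.1.1 p.1.2 (abs_pos.1 hpos)
    have h3 : (|polarCoeff η p.1.1 p.1.2| ^ (-θ)) ^ n ≤ (((1 + ‖η‖) / 2) ^ (-r)) ^ 2 := by
      rw [← Real.rpow_mul_natCast hpos.le, ← Real.rpow_mul_natCast (by positivity)]
      have he : -r * (2 : ℕ) = -θ * n := by
        rw [hr]
        push_cast
        ring
      rw [he]
      refine Real.rpow_le_rpow_of_nonpos (by positivity) (by linarith) ?_
      nlinarith [Nat.cast_nonneg (α := ℝ) n]
    calc ‖Iint A η‖ ≤ √C * ((1 + ‖η‖) / 2) ^ (-r) := by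
          refine le_of_sq_le_sq ?_ (by positivity)
          rw [mul_pow, Real.sq_sqrt hC0]
          exact h2.trans (by gcongr)
      _ ≤ _ := by gcongr; linarith

lemma card_le_gamT [NeZero m] (B : Matrix (Fin m) (Fin m) ℤ)
    (hBmono : ∀ i j : Fin m, i ≤ j → B i i ≤ B j j) (hB11 : 2 ≤ B 0 0) : (m : ℝ) ≤ gamT B := by
  have h : ∀ i, 1 ≤ (gamI B i)⁻¹ := by
    intro i
    have h0 : (2 : ℝ) ≤ ((B 0 0 : ℤ) : ℝ) := by exact_mod_cast hB11
    have h1 : ((B 0 0 : ℤ) : ℝ) ≤ ((B i i : ℤ) : ℝ) := by exact_mod_cast hBmono 0 i (Fin.zero_le i)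
    rw [gamI, inv_div, one_le_div (Real.log_pos (by linarith))]
    exact Real.log_le_log (by linarith) h1
  calc (m : ℝ) = ∑ _i : Fin m, (1 : ℝ) := by simp
    _ ≤ gamT B := Finset.sum_le_sum fun i _ => h i

lemma two_mul_card_idx_add_one_lt [NeZero m] {γ : ℝ} (hγ : (m : ℝ) ≤ γ)
    (hn : (n : ℝ) > (2 * γ + (m : ℝ) * ((m : ℝ) - 1)) * ((m : ℝ) * ((m : ℝ) + 1) / 2 + 1)) :
    2 * ((Fintype.card (Idx m) : ℝ) + 1) < n := by
  have hcard : (Fintype.card (Idx m) : ℝ) ≤ m ^ 2 := by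
    have h := Fintype.card_subtype_le fun p : Fin m × Fin m => p.1 ≤ p.2
    rw [Fintype.card_prod, Fintype.card_fin] at h
    rw [sq]
    exact_mod_cast h
  have hm : (m : ℝ) = 1 ∨ (2 : ℝ) ≤ m := by
    have : m = 1 ∨ 2 ≤ m := by have := NeZero.pos m; omega
    exact_mod_cast this
  have h1 : (2 * (m : ℝ) + (m : ℝ) * ((m : ℝ) - 1)) * ((m : ℝ) * ((m : ℝ) + 1) / 2 + 1) < n := by
    refine lt_of_le_of_lt ?_ hn
    gcongr
  rcases hm with hm | hm
  · rw [hm] at h1 hcard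
    linarith
  · have h2 : (6 : ℝ) ≤ (m : ℝ) * (m + 1) := by nlinarith
    nlinarith

lemma setIntegral_compl_le [NeZero m] {Q δ K : ℝ} (hQ : 1 ≤ Q) (hδ0 : 0 < δ) (hδ1 : δ ≤ 1)
    (hK : 0 ≤ K) {F : (Idx m → ℝ) → ℂ}
    (hbound : ∀ η, ‖F η‖ ≤ K * (1 + ‖η‖) ^ (-((Fintype.card (Idx m) : ℝ) + 1))) :
    ‖∫ η in (Set.univ.pi fun _ : Idx m => Set.Icc (-Q) Q)ᶜ, F η‖ ≤
      K * (∫ η : Idx m → ℝ, (1 + ‖η‖) ^ (-((Fintype.card (Idx m) : ℝ) + δ))) * Q ^ (-1 + δ) := by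
  have hint : Integrable fun η : Idx m → ℝ => (1 + ‖η‖) ^ (-((Fintype.card (Idx m) : ℝ) + δ)) :=
    integrable_one_add_norm (by rw [Module.finrank_fintype_fun_eq_card]; linarith)
  have hSm : MeasurableSet (Set.univ.pi fun _ : Idx m => Set.Icc (-Q) Q)ᶜ :=
    (MeasurableSet.univ_pi fun _ => measurableSet_Icc).compl
  have hpt : ∀ η ∈ (Set.univ.pi fun _ : Idx m => Set.Icc (-Q) Q)ᶜ, ‖F η‖ ≤
      K * Q ^ (-1 + δ) * (1 + ‖η‖) ^ (-((Fintype.card (Idx m) : ℝ) + δ)) := by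
    intro η hη
    have hQη : Q ≤ 1 + ‖η‖ := by
      by_contra hlt
      refine hη fun p _ => abs_le.1 ?_
      have := norm_le_pi_norm η p
      rw [Real.norm_eq_abs] at this
      linarith
    refine (hbound η).trans ?_
    rw [mul_assoc]
    gcongr
    rw [show -((Fintype.card (Idx m) : ℝ) + 1) =
      (-1 + δ) + -((Fintype.card (Idx m) : ℝ) + δ) by ring, Real.rpow_add (by positivity)]
    gcongr ?_ * _
    exact Real.rpow_le_rpow_of_nonpos (by linarith) hQη (by linarith)
  calc _ ≤ ∫ η in (Set.univ.pi fun _ : Idx m => Set.Icc (-Q) Q)ᶜ,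
        K * Q ^ (-1 + δ) * (1 + ‖η‖) ^ (-((Fintype.card (Idx m) : ℝ) + δ)) :=
        norm_integral_le_of_norm_le (hint.const_mul _).integrableOn
          ((ae_restrict_iff' hSm).2 (Eventually.of_forall hpt))
    _ ≤ ∫ η : Idx m → ℝ, K * Q ^ (-1 + δ) * (1 + ‖η‖) ^ (-((Fintype.card (Idx m) : ℝ) + δ)) :=
        setIntegral_le_integral (hint.const_mul _)
          (Eventually.of_forall fun η => by positivity)
    _ = _ := by
        rw [integral_const_mul]
        ring

end Auxiliary

/-- Lemma 5.3, singular integral convergence. -/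
theorem stmt12 (m n : ℕ) [NeZero m] [NeZero n]
    (A : Matrix (Fin n) (Fin n) ℤ) (hAs : A.IsSymm)
    (hApd : (A.map ((↑) : ℤ → ℝ)).PosDef)
    (B : Matrix (Fin m) (Fin m) ℤ) (hBs : B.IsSymm)
    (hBpd : (B.map ((↑) : ℤ → ℝ)).PosDef)
    (hBmono : ∀ i j : Fin m, i ≤ j → B i i ≤ B j j)
    (hBoff : ∀ i j : Fin m, i < j → |B i j| ≤ B i i)
    (hB11 : 2 ≤ B 0 0)
    (hn : (n : ℝ) > (2 * gamT B + (m : ℝ) * ((m : ℝ) - 1)) *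
      ((m : ℝ) * ((m : ℝ) + 1) / 2 + 1)) :
    (∀ c : Idx m → ℝ, MeasureTheory.Integrable
      (fun η : Idx m → ℝ => Iint A η * eR (-(∑ p : Idx m, η p * c p)))) ∧
    ∀ ε : ℝ, 0 < ε → ∃ K : ℝ, 0 < K ∧
      ∀ Q : ℝ, 1 ≤ Q → ∀ c : Idx m → ℝ,
        ‖Jint A c - JintT A Q c‖ ≤ K * Q ^ (-1 + ε) := by
  have hcard := two_mul_card_idx_add_one_lt (card_le_gamT B hBmono hB11) hn
  have hn0 : (0 : ℝ) < n := Nat.cast_pos.2 (NeZero.pos n)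
  set R : ℝ := (Fintype.card (Idx m) : ℝ) with hR
  have hR0 : 0 ≤ R := Nat.cast_nonneg _
  obtain ⟨C, hC0, hC⟩ := exists_norm_Iint_le_rpow (m := m) (θ := 2 * (R + 1) / n) (by positivity)
    ((div_lt_one hn0).2 hcard) A hAs hApd.det_pos.ne'
  rw [show 2 * (R + 1) / n * n / 2 = R + 1 by field_simp] at hC
  have hbound : ∀ c η : Idx m → ℝ,
      ‖Iint A η * eR (-(∑ p : Idx m, η p * c p))‖ ≤ C * (1 + ‖η‖) ^ (-(R + 1)) := by
    intro c η
    rw [norm_mul, norm_eR, mul_one]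
    exact hC η
  have hint : ∀ c : Idx m → ℝ, Integrable
      (fun η : Idx m → ℝ => Iint A η * eR (-(∑ p : Idx m, η p * c p))) := by
    intro c
    refine Integrable.mono' (g := fun η => C * (1 + ‖η‖) ^ (-(R + 1))) ?_ ?_
      (Eventually.of_forall (hbound c))
    · refine (integrable_one_add_norm ?_).const_mul _
      rw [Module.finrank_fintype_fun_eq_card]
      linarith
    · refine Continuous.aestronglyMeasurable ((continuous_Iint A).mul (continuous_eR.comp ?_))
      fun_prop
  refine ⟨hint, fun ε hε => ?_⟩
  set δ : ℝ := min ε 1 with hδ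
  have hδ0 : 0 < δ := lt_min hε one_pos
  set T : ℝ := ∫ η : Idx m → ℝ, (1 + ‖η‖) ^ (-(R + δ)) with hT
  have hT0 : 0 ≤ T := integral_nonneg fun η => by positivity
  refine ⟨C * T + 1, by positivity, fun Q hQ c => ?_⟩
  have hsub : Jint A c - JintT A Q c =
      ∫ η in (Set.univ.pi fun _ : Idx m => Set.Icc (-Q) Q)ᶜ,
        Iint A η * eR (-(∑ p : Idx m, η p * c p)) := by
    rw [setIntegral_compl (MeasurableSet.univ_pi fun _ => measurableSet_Icc) (hint c)]
    rfl
  rw [hsub]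
  calc _ ≤ C * T * Q ^ (-1 + δ) :=
        setIntegral_compl_le hQ hδ0 (min_le_right _ _) hC0 (hbound c)
    _ ≤ (C * T + 1) * Q ^ (-1 + ε) := by
        gcongr
        · linarith
        · exact min_le_left _ _
end
end
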